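/- arXiv:1605.04473 — 3 statements merged into one kernel-verified Lean document; each statement's English description precedes it below -/
import Mathlib

section
/- Let F : ℝ → ℝ be convex, differentiable, and superlinear, let G : ℝ → ℝ be any function, let x ∈ ℝ, and let t > 0. Then the infimum over ξ ∈ ℝ of t·F*((x − ξ)/t) + G(ξ) equals the infimum over p ∈ ℝ of (p·F′(p) − F(p))·t + G(x − F′(p)·t), where F*(q) = sup_{r ∈ ℝ} (r·q − F(r)) is the Legendre transform of F. -/
/-!
If `F` is convex, the supremum defining `F*` at `∇F p` is attained at `p`, because `F` lies above
its tangent plane there; hence `F* (∇F p) = ⟪∇F p, p⟫ - F p`. If `F` is superlinear, `F - ⟪q, ·⟫`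
attains its minimum for every `q`, and the gradient of `F` at a minimizer is `q`. So
`p ↦ x - t ∇F p` is a surjective substitution for `ξ` turning the first minimized function into
the second.
-/

open Filter InnerProductSpace
open scoped Gradient RealInnerProductSpace

section NormedSpace

variable {E : Type*} [NormedAddCommGroup E] [NormedSpace ℝ E] {F : E → ℝ}

lemma add_apply_sub_le_of_convexOn_of_hasFDerivWithinAt {s : Set E} {F' : StrongDual ℝ E} {p r : E}
    (hF : ConvexOn ℝ s F) (hp : p ∈ s) (hr : r ∈ s) (hF' : HasFDerivWithinAt F F' s p) :
    F p + F' (r - p) ≤ F r := by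
  let line : ℝ →ᵃ[ℝ] E := AffineMap.lineMap p r
  have line_zero : line 0 = p := AffineMap.lineMap_apply_zero p r
  have line_one : line 1 = r := AffineMap.lineMap_apply_one p r
  have hderiv : HasDerivWithinAt (F ∘ line) (F' (r - p)) (line ⁻¹' s) 0 :=
    (line_zero.symm ▸ hF').comp_hasDerivWithinAt 0
      AffineMap.hasDerivWithinAt_lineMap (Set.mapsTo_preimage line s)
  have hslope : F' (r - p) ≤ slope (F ∘ line) 0 1 :=
    (hF.comp_affineMap line).le_slope_of_hasDerivWithinAt
      (by simpa [line_zero] using hp) (by simpa [line_one] using hr) one_pos hderiv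
  simp only [slope_def_field, Function.comp_apply, line_zero, line_one, sub_zero, div_one]
    at hslope
  linarith

variable [ProperSpace E]

lemma tendsto_sub_apply_atTop_of_superlinear
    (hF : Tendsto (fun p => F p / ‖p‖) (cocompact E) atTop) (q : StrongDual ℝ E) :
    Tendsto (fun p => F p - q p) (cocompact E) atTop := by
  have hnorm : Tendsto (norm : E → ℝ) (cocompact E) atTop := tendsto_norm_cocompact_atTop
  refine tendsto_atTop_mono' _ ?_ hnorm
  filter_upwards [hF.eventually_ge_atTop (‖q‖ + 1), hnorm.eventually_gt_atTop 0] with p hFp hp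
  have hgrowth : (‖q‖ + 1) * ‖p‖ ≤ F p := (le_div_iff₀ hp).1 hFp
  have hq : q p ≤ ‖q‖ * ‖p‖ := (le_abs_self _).trans (q.le_opNorm p)
  linarith

lemma fderiv_surjective_of_superlinear (hdiff : Differentiable ℝ F)
    (hsuper : Tendsto (fun p => F p / ‖p‖) (cocompact E) atTop) :
    Function.Surjective (fderiv ℝ F) := by
  intro q
  obtain ⟨p, hmin⟩ := (hdiff.continuous.sub q.continuous).exists_forall_le
    (tendsto_sub_apply_atTop_of_superlinear hsuper q)
  have hlocal : IsLocalMin (fun r => F r - q r) p := Eventually.of_forall hmin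
  exact ⟨p, sub_eq_zero.1 <|
    hlocal.hasFDerivAt_eq_zero ((hdiff p).hasFDerivAt.sub q.hasFDerivAt)⟩

end NormedSpace

section InnerProductSpace

variable {E : Type*} [NormedAddCommGroup E] [InnerProductSpace ℝ E] {F : E → ℝ}

/-- The Legendre transform `F*` of `F`, with the dual of `E` identified with `E` through the inner
product. It takes real values, so it is `0` where the supremum is infinite. -/
noncomputable def legendreTransform (F : E → ℝ) (q : E) : ℝ :=
  ⨆ r, ⟪q, r⟫ - F r

lemma legendreTransform_gradient [CompleteSpace E] {p : E} (hconv : ConvexOn ℝ Set.univ F)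
    (hdiff : DifferentiableAt ℝ F p) :
    legendreTransform F (∇ F p) = ⟪∇ F p, p⟫ - F p := by
  refine IsGreatest.csSup_eq ⟨⟨p, rfl⟩, ?_⟩
  rintro _ ⟨r, rfl⟩
  have htangent : F p + ⟪∇ F p, r - p⟫ ≤ F r := by
    simpa only [inner_gradient_left] using
      add_apply_sub_le_of_convexOn_of_hasFDerivWithinAt hconv (Set.mem_univ p) (Set.mem_univ r)
        hdiff.hasFDerivAt.hasFDerivWithinAt
  rw [inner_sub_right] at htangent
  linarith

variable [ProperSpace E]

lemma gradient_surjective_of_superlinear (hdiff : Differentiable ℝ F)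
    (hsuper : Tendsto (fun p => F p / ‖p‖) (cocompact E) atTop) :
    Function.Surjective (∇ F) :=
  (toDual ℝ E).symm.surjective.comp (fderiv_surjective_of_superlinear hdiff hsuper)

theorem stmt_7_general (hconv : ConvexOn ℝ Set.univ F) (hdiff : Differentiable ℝ F)
    (hsuper : Tendsto (fun p => F p / ‖p‖) (cocompact E) atTop)
    (G : E → ℝ) (x : E) {t : ℝ} (ht : t ≠ 0) :
    ⨅ ξ, t * legendreTransform F (t⁻¹ • (x - ξ)) + G ξ =
      ⨅ p, (⟪∇ F p, p⟫ - F p) * t + G (x - t • ∇ F p) := by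
  have hsubst : Function.Surjective fun p => x - t • ∇ F p :=
    (Equiv.subLeft x).surjective.comp <|
      (MulAction.surjective₀ ht).comp (gradient_surjective_of_superlinear hdiff hsuper)
  rw [← hsubst.iInf_comp]
  congr! 2 with p
  rw [sub_sub_cancel, inv_smul_smul₀ ht, legendreTransform_gradient hconv (hdiff p), mul_comm]

end InnerProductSpace

lemma setOf_exists_eq_apply_eq_range {ι α : Type*} (f : ι → α) :
    {y | ∃ i, y = f i} = Set.range f := by
  simp only [Set.range, eq_comm]

lemma legendreTransform_eq_sSup (F : ℝ → ℝ) (q : ℝ) :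
    legendreTransform F q = sSup {y | ∃ r, y = r * q - F r} := by
  simp only [legendreTransform, setOf_exists_eq_apply_eq_range, sSup_range, RCLike.inner_apply,
    conj_trivial]

/-- For convex, differentiable, superlinear `F`, the Lax–Oleinik minimization over `ξ`
equals the minimization over `p` obtained via the substitution `ξ = x - F' p · t`. -/
theorem stmt_7 (F : ℝ → ℝ) (hconv : ConvexOn ℝ Set.univ F)
    (hdiff : Differentiable ℝ F)
    (hsuper : Filter.Tendsto (fun p => F p / |p|) (Filter.cocompact ℝ) Filter.atTop)
    (Fstar : ℝ → ℝ)
    (hFstar : ∀ q : ℝ, Fstar q = sSup {y : ℝ | ∃ r : ℝ, y = r * q - F r})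
    (G : ℝ → ℝ) (x t : ℝ) (ht : 0 < t) :
    sInf {y : ℝ | ∃ ξ : ℝ, y = t * Fstar ((x - ξ) / t) + G ξ} =
      sInf {y : ℝ | ∃ p : ℝ, y = (p * deriv F p - F p) * t + G (x - deriv F p * t)} := by
  obtain rfl : Fstar = legendreTransform F :=
    funext fun q => (hFstar q).trans (legendreTransform_eq_sSup F q).symm
  simpa only [setOf_exists_eq_apply_eq_range, sInf_range, gradient_eq_deriv', RCLike.inner_apply,
    conj_trivial, smul_eq_mul, div_eq_inv_mul, mul_comm t (deriv F _)]
    using stmt_7_general hconv hdiff hsuper G x ht.ne'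
end

section
/- Define u : ℝ × ℝ → ℝ by u(x,t) = −e^{−10x}/(1 + 9e^{−10t}). Then u(x,0) = −e^{−10x}/10 for all x ∈ ℝ, and u satisfies the space-dependent conservation law ∂_t u(x,t) + ∂_x [ (1 + e^{10x}·u(x,t))·u(x,t) ] = 0 for all (x,t) ∈ ℝ × ℝ, where ∂_x applies to the map y ↦ (1 + e^{10y}·u(y,t))·u(y,t). -/
/-!
For a separable function `u (x, t) = a x * g t`, the ratio `u / a` is `g t`, independent of `x`.
Hence the flux `V (u / a) * u` is `V (g t) * g t` times `a x`, and if `a' = -k a` then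
`u_t + (V (u / a) u)_x = 0` reduces to the ordinary differential equation `g' = k V(g) g`.
When `V r = 1 + r`, this is the logistic equation for `-g`, which is solved by the translates of
`sigmoid (k t)`. The factor `9` in `u` corresponds to the translation by `log 9`.
-/

section Separable

variable {𝕜 : Type*} [NontriviallyNormedField 𝕜] {a b g : 𝕜 → 𝕜} {x t : 𝕜}

theorem hasDerivAt_flux_of_separable {a' : 𝕜} (hba : ∀ y, b y * a y = 1)
    (ha : HasDerivAt a a' x) (V : 𝕜 → 𝕜) (c : 𝕜) :
    HasDerivAt (fun y => V (b y * (a y * c)) * (a y * c)) (a' * (V c * c)) x := by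
  have flux_eq : (fun y => V (b y * (a y * c)) * (a y * c)) = fun y => a y * (V c * c) := by
    funext y
    rw [← mul_assoc (b y), hba, one_mul, mul_left_comm]
  rw [flux_eq]
  exact ha.mul_const (V c * c)

theorem deriv_add_deriv_flux_eq_zero_of_separable {k : 𝕜} {V : 𝕜 → 𝕜}
    (hba : ∀ y, b y * a y = 1) (ha : HasDerivAt a (-k * a x) x)
    (hg : HasDerivAt g (k * (V (g t) * g t)) t) :
    deriv (fun τ => a x * g τ) t +
      deriv (fun y => V (b y * (a y * g t)) * (a y * g t)) x = 0 := by
  rw [(hg.const_mul (a x)).deriv, (hasDerivAt_flux_of_separable hba ha V (g t)).deriv]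
  ring

end Separable

theorem hasDerivAt_exp_const_mul (k x : ℝ) :
    HasDerivAt (fun y => Real.exp (k * y)) (k * Real.exp (k * x)) x := by
  simpa only [mul_comm, mul_one] using (hasDerivAt_const_mul k).exp

theorem hasDerivAt_neg_sigmoid_mul_sub (k c t : ℝ) :
    HasDerivAt (fun τ => -Real.sigmoid (k * τ - c))
      (k * ((1 + -Real.sigmoid (k * t - c)) * -Real.sigmoid (k * t - c))) t := by
  have affine : HasDerivAt (fun τ => k * τ - c) k t := (hasDerivAt_const_mul k).sub_const c
  refine ((Real.hasDerivAt_sigmoid (k * t - c)).comp t affine).neg.congr_deriv ?_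
  ring

theorem sigmoid_sub_log {C : ℝ} (hC : 0 < C) (s : ℝ) :
    Real.sigmoid (s - Real.log C) = (1 + C * Real.exp (-s))⁻¹ := by
  rw [Real.sigmoid_def, neg_sub, sub_eq_add_neg, Real.exp_add, Real.exp_log hC]

/-- The function `u (x,t) = -e^{-10x}/(1 + 9 e^{-10t})` has initial value
`-e^{-10x}/10` and solves `u_t + ((1 + u/a) u)_x = 0` with `a x = e^{-10x}`. -/
theorem stmt_12 (u : ℝ → ℝ → ℝ)
    (hu : ∀ x t : ℝ, u x t = -Real.exp (-10 * x) / (1 + 9 * Real.exp (-10 * t))) :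
    (∀ x : ℝ, u x 0 = -Real.exp (-10 * x) / 10) ∧
    ∀ x t : ℝ,
      deriv (fun τ => u x τ) t +
        deriv (fun y => (1 + Real.exp (10 * y) * u y t) * u y t) x = 0 := by
  refine ⟨fun x => by rw [hu]; norm_num, fun x t => ?_⟩
  have u_separable (y τ : ℝ) :
      u y τ = Real.exp (-10 * y) * -Real.sigmoid (10 * τ - Real.log 9) := by
    rw [hu, sigmoid_sub_log (by norm_num), neg_mul 10 τ, mul_neg, neg_div, div_eq_mul_inv]
  have exp_mul_exp_neg (y : ℝ) : Real.exp (10 * y) * Real.exp (-10 * y) = 1 := by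
    rw [neg_mul, ← Real.exp_add, add_neg_cancel, Real.exp_zero]
  simp only [u_separable]
  exact deriv_add_deriv_flux_eq_zero_of_separable (V := fun r => 1 + r) exp_mul_exp_neg
    (hasDerivAt_exp_const_mul (-10) x) (hasDerivAt_neg_sigmoid_mul_sub 10 (Real.log 9) t)
end

section
/- Fix x₀, C ∈ ℝ and t > 0, and define x, p : ℝ → ℝ by x(r) = (x₀ − C)e^{−r} + C·e^{r} and p(r) = (x₀ − C)e^{−r} − C·e^{r}. Then ∫₀ᵗ (x(r)² + p(r)²)/2 dr = (C²/2)(e^{2t} − 1) − ((x₀ − C)²/2)(e^{−2t} − 1), and, writing X := x(t), this quantity equals ((x₀² + X²)/2)·coth(t) − x₀·X·csch(t). -/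
/-!
Along `ẋ = -p`, `ṗ = -x` we have `d/dr ⟪x, p⟫ = -(‖x‖² + ‖p‖²)`, so the running cost is the boundary
term `(⟪x s, p s⟫ - ⟪x t, p t⟫) / 2`. For an exponential trajectory this is read off directly. The
linear flow gives `x t = cosh (t - s) x s - sinh (t - s) p s`; using it from `s` to `t` and from `t`
to `s` eliminates both momenta in favour of the endpoints `x s` and `x t`.
-/

section Trajectory

open Real
open scoped RealInnerProductSpace

variable {E : Type*} [NormedAddCommGroup E]

/-- Solutions `(x, p)`, defined for all times, of the Hamiltonian system `ẋ = -p`, `ṗ = -x` of the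
Lagrangian `(‖x‖² + ‖α‖²) / 2`, with state `x` and momentum `p` in the same space `E`. -/
structure IsHamiltonianTrajectory [NormedSpace ℝ E] (x p : ℝ → E) : Prop where
  hasDerivAt_state (r : ℝ) : HasDerivAt x (-p r) r
  hasDerivAt_momentum (r : ℝ) : HasDerivAt p (-x r) r

namespace IsHamiltonianTrajectory

section NormedSpace

variable [NormedSpace ℝ E] {x p : ℝ → E}

theorem of_exp (a b : E) :
    IsHamiltonianTrajectory (fun r ↦ exp (-r) • a + exp r • b)
      (fun r ↦ exp (-r) • a - exp r • b) := by
  have hasDerivAt_decaying (r : ℝ) : HasDerivAt (fun r ↦ exp (-r) • a) (-(exp (-r) • a)) r := by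
    simpa using (hasDerivAt_neg r).exp.smul_const a
  have hasDerivAt_growing (r : ℝ) : HasDerivAt (fun r ↦ exp r • b) (exp r • b) r :=
    (hasDerivAt_exp r).smul_const b
  constructor <;> intro r
  · exact ((hasDerivAt_decaying r).add (hasDerivAt_growing r)).congr_deriv (by abel)
  · exact ((hasDerivAt_decaying r).sub (hasDerivAt_growing r)).congr_deriv (by abel)

theorem continuous_state (h : IsHamiltonianTrajectory x p) : Continuous x :=
  continuous_iff_continuousAt.2 fun r ↦ (h.hasDerivAt_state r).continuousAt

theorem continuous_momentum (h : IsHamiltonianTrajectory x p) : Continuous p :=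
  continuous_iff_continuousAt.2 fun r ↦ (h.hasDerivAt_momentum r).continuousAt

theorem state_eq_cosh_smul_sub_sinh_smul (h : IsHamiltonianTrajectory x p) (s t : ℝ) :
    x t = cosh (t - s) • x s - sinh (t - s) • p s := by
  -- Flowing from time `r` up to time `t` gives a result independent of `r`; take `r = t`, `r = s`.
  let flow (r : ℝ) : E := cosh (t - r) • x r - sinh (t - r) • p r
  have hasDerivAt_flow (r : ℝ) : HasDerivAt flow 0 r := by
    have hsub : HasDerivAt (fun r ↦ t - r) (-1) r := (hasDerivAt_id r).const_sub t
    refine ((hsub.cosh.smul (h.hasDerivAt_state r)).sub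
      (hsub.sinh.smul (h.hasDerivAt_momentum r))).congr_deriv ?_
    module
  have flow_const : flow t = flow s :=
    is_const_of_deriv_eq_zero (fun r ↦ (hasDerivAt_flow r).differentiableAt)
      (fun r ↦ (hasDerivAt_flow r).deriv) t s
  simpa [flow] using flow_const

theorem sinh_smul_momentum (h : IsHamiltonianTrajectory x p) (s t : ℝ) :
    sinh (t - s) • p s = cosh (t - s) • x s - x t := by
  rw [h.state_eq_cosh_smul_sub_sinh_smul s t, sub_sub_cancel]

end NormedSpace

variable [InnerProductSpace ℝ E] {x p : ℝ → E}

theorem integral_runningCost (h : IsHamiltonianTrajectory x p) (s t : ℝ) :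
    ∫ r in s..t, (‖x r‖ ^ 2 + ‖p r‖ ^ 2) / 2 = (⟪x s, p s⟫ - ⟪x t, p t⟫) / 2 := by
  have hasDerivAt_antideriv (r : ℝ) :
      HasDerivAt (fun r ↦ -⟪x r, p r⟫ / 2) ((‖x r‖ ^ 2 + ‖p r‖ ^ 2) / 2) r := by
    refine (((h.hasDerivAt_state r).inner ℝ (h.hasDerivAt_momentum r)).neg.div_const 2).congr_deriv
      ?_
    simp only [inner_neg_left, inner_neg_right, real_inner_self_eq_norm_sq]
    ring
  have hcont : Continuous fun r ↦ (‖x r‖ ^ 2 + ‖p r‖ ^ 2) / 2 :=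
    ((h.continuous_state.norm.pow 2).add (h.continuous_momentum.norm.pow 2)).div_const 2
  rw [intervalIntegral.integral_eq_sub_of_hasDerivAt (fun r _ ↦ hasDerivAt_antideriv r)
    (hcont.intervalIntegrable s t)]
  ring

theorem integral_runningCost_eq_coth_csch (h : IsHamiltonianTrajectory x p) {s t : ℝ}
    (hst : s ≠ t) :
    ∫ r in s..t, (‖x r‖ ^ 2 + ‖p r‖ ^ 2) / 2 =
      (‖x s‖ ^ 2 + ‖x t‖ ^ 2) / 2 * (cosh (t - s) / sinh (t - s)) -
        ⟪x s, x t⟫ * (1 / sinh (t - s)) := by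
  have hsinh : sinh (t - s) ≠ 0 := sinh_ne_zero.2 (sub_ne_zero.2 hst.symm)
  have initial_momentum :
      sinh (t - s) * ⟪x s, p s⟫ = cosh (t - s) * ‖x s‖ ^ 2 - ⟪x s, x t⟫ := by
    rw [← real_inner_smul_right, h.sinh_smul_momentum, inner_sub_right, real_inner_smul_right,
      real_inner_self_eq_norm_sq]
  have final_momentum :
      sinh (t - s) * ⟪x t, p t⟫ = ⟪x s, x t⟫ - cosh (t - s) * ‖x t‖ ^ 2 := by
    rw [← neg_sub s t, sinh_neg, cosh_neg, neg_mul, ← real_inner_smul_right, h.sinh_smul_momentum,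
      inner_sub_right, real_inner_smul_right, real_inner_self_eq_norm_sq,
      real_inner_comm (x s) (x t), neg_sub]
  rw [h.integral_runningCost]
  field_simp
  linear_combination initial_momentum - final_momentum

theorem integral_runningCost_exp (a b : E) (s t : ℝ) :
    ∫ r in s..t, (‖exp (-r) • a + exp r • b‖ ^ 2 + ‖exp (-r) • a - exp r • b‖ ^ 2) / 2 =
      ‖b‖ ^ 2 / 2 * (exp (2 * t) - exp (2 * s)) -
        ‖a‖ ^ 2 / 2 * (exp (-(2 * t)) - exp (-(2 * s))) := by
  have inner_state_momentum (r : ℝ) :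
      ⟪exp (-r) • a + exp r • b, exp (-r) • a - exp r • b⟫ =
        exp (-(2 * r)) * ‖a‖ ^ 2 - exp (2 * r) * ‖b‖ ^ 2 := by
    have exp_neg_two_mul : exp (-(2 * r)) = exp (-r) ^ 2 := by rw [← exp_nat_mul]; ring_nf
    have exp_two_mul : exp (2 * r) = exp r ^ 2 := by rw [← exp_nat_mul]; norm_cast
    rw [exp_neg_two_mul, exp_two_mul, inner_add_left, inner_sub_right, inner_sub_right,
      real_inner_comm (exp (-r) • a) (exp r • b)]
    simp only [real_inner_self_eq_norm_sq, norm_smul, norm_eq_abs, abs_exp]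
    ring
  rw [(of_exp a b).integral_runningCost, inner_state_momentum, inner_state_momentum]
  ring

end IsHamiltonianTrajectory

end Trajectory

/-- The running cost `∫₀ᵗ (x r ² + p r ²)/2 dr` along the Hamiltonian trajectories
`x r = (x₀ - C) e^{-r} + C e^r`, `p r = (x₀ - C) e^{-r} - C e^r` equals
`(C²/2)(e^{2t} - 1) - ((x₀ - C)²/2)(e^{-2t} - 1)`, which, with `X = x t`, equals
`((x₀² + X²)/2) coth t - x₀ X csch t`. -/
theorem stmt_14 (x₀ C t : ℝ) (ht : 0 < t) (x p : ℝ → ℝ)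
    (hx : ∀ r : ℝ, x r = (x₀ - C) * Real.exp (-r) + C * Real.exp r)
    (hp : ∀ r : ℝ, p r = (x₀ - C) * Real.exp (-r) - C * Real.exp r) :
    (∫ r in (0:ℝ)..t, ((x r) ^ 2 + (p r) ^ 2) / 2) =
      C ^ 2 / 2 * (Real.exp (2 * t) - 1) -
        (x₀ - C) ^ 2 / 2 * (Real.exp (-(2 * t)) - 1) ∧
    (∫ r in (0:ℝ)..t, ((x r) ^ 2 + (p r) ^ 2) / 2) =
      (x₀ ^ 2 + (x t) ^ 2) / 2 *
          ((Real.exp t + Real.exp (-t)) / (Real.exp t - Real.exp (-t))) -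
        x₀ * x t * (2 / (Real.exp t - Real.exp (-t))) := by
  obtain rfl : x = fun r ↦ Real.exp (-r) • (x₀ - C) + Real.exp r • C :=
    funext fun r ↦ by rw [hx, smul_eq_mul, smul_eq_mul, mul_comm C, mul_comm (x₀ - C)]
  obtain rfl : p = fun r ↦ Real.exp (-r) • (x₀ - C) - Real.exp r • C :=
    funext fun r ↦ by rw [hp, smul_eq_mul, smul_eq_mul, mul_comm C, mul_comm (x₀ - C)]
  constructor
  · simpa only [Real.norm_eq_abs, sq_abs, mul_zero, neg_zero, Real.exp_zero] using
      IsHamiltonianTrajectory.integral_runningCost_exp (x₀ - C) C 0 t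
  · have coth_eq : (Real.exp t + Real.exp (-t)) / (Real.exp t - Real.exp (-t)) =
        Real.cosh t / Real.sinh t := by
      rw [Real.cosh_eq, Real.sinh_eq, div_div_div_cancel_right₀ two_ne_zero]
    have csch_eq : 2 / (Real.exp t - Real.exp (-t)) = 1 / Real.sinh t := by
      rw [Real.sinh_eq, one_div_div]
    rw [coth_eq, csch_eq]
    have cost_eq :=
      (IsHamiltonianTrajectory.of_exp (x₀ - C) C).integral_runningCost_eq_coth_csch ht.ne
    simpa [sq_abs, mul_comm] using cost_eq
end
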